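/- Let (H,α) be a monoidal Hom-Hopf algebra with bijective antipode S and (A,β) a right (H,α)-Hom-comodule algebra, B=A^{coH}. With f: A⊗H→A⊗H, f(a⊗h)=β(a₍₀₎)⊗a₍₁₎S(α⁻¹(h)), one has can' = f∘can; explicitly, for all a,b∈A: f(β⁻¹(a)b₍₀₎ ⊗ α(b₍₁₎)) = a₍₀₎β⁻¹(b) ⊗ α(a₍₁₎). Consequently, can is bijective if and only if can' is bijective. -/

import Mathlib

open TensorProduct

noncomputable section

/-- A (unital) monoidal Hom-bialgebra, following Caenepeel–Goyvaerts.
The algebra axioms are stated pointwise, the coalgebra axioms at the level of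
linear maps (using the standard vector-space associator to compare the two
sides of Hom-coassociativity). -/
structure MonoidalHomBialgebra (k : Type) [Field k] (H : Type) [AddCommGroup H] [Module k H] where
  mul : H →ₗ[k] H →ₗ[k] H
  one : H
  comul : H →ₗ[k] H ⊗[k] H
  counit : H →ₗ[k] k
  aut : H ≃ₗ[k] H
  hom_assoc : ∀ a b c, mul (aut a) (mul b c) = mul (mul a b) (aut c)
  mulOne : ∀ a, mul a one = aut a
  oneMul : ∀ a, mul one a = aut a
  aut_mul : ∀ a b, aut (mul a b) = mul (aut a) (aut b)
  aut_one : aut one = one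
  coassoc :
    (TensorProduct.assoc k H H H).toLinearMap ∘ₗ
        (TensorProduct.map comul aut.symm.toLinearMap) ∘ₗ comul =
      (TensorProduct.map aut.symm.toLinearMap comul) ∘ₗ comul
  counit_left :
    (TensorProduct.lid k H).toLinearMap ∘ₗ (TensorProduct.map counit LinearMap.id) ∘ₗ comul =
      aut.symm.toLinearMap
  counit_right :
    (TensorProduct.rid k H).toLinearMap ∘ₗ (TensorProduct.map LinearMap.id counit) ∘ₗ comul =
      aut.symm.toLinearMap
  comul_aut :
    comul ∘ₗ aut.toLinearMap = (TensorProduct.map aut.toLinearMap aut.toLinearMap) ∘ₗ comul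
  counit_aut : counit ∘ₗ aut.toLinearMap = counit
  comul_mul :
    comul ∘ₗ TensorProduct.lift mul =
      (TensorProduct.map (TensorProduct.lift mul) (TensorProduct.lift mul)) ∘ₗ
        (TensorProduct.tensorTensorTensorComm k H H H H).toLinearMap ∘ₗ
          (TensorProduct.map comul comul)
  comul_one : comul one = one ⊗ₜ[k] one
  counit_mul : ∀ a b, counit (mul a b) = counit a * counit b
  counit_one : counit one = 1

/-- A monoidal Hom-Hopf algebra: a monoidal Hom-bialgebra with an antipode. -/
structure MonoidalHomHopf (k : Type) [Field k] (H : Type) [AddCommGroup H] [Module k H]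
    extends MonoidalHomBialgebra k H where
  antipode : H →ₗ[k] H
  antipode_aut : antipode ∘ₗ aut.toLinearMap = aut.toLinearMap ∘ₗ antipode
  antipode_mul_left :
    TensorProduct.lift mul ∘ₗ (TensorProduct.map antipode LinearMap.id) ∘ₗ comul =
      LinearMap.toSpanSingleton k H one ∘ₗ counit
  antipode_mul_right :
    TensorProduct.lift mul ∘ₗ (TensorProduct.map LinearMap.id antipode) ∘ₗ comul =
      LinearMap.toSpanSingleton k H one ∘ₗ counit

variable {k : Type} [Field k] {H : Type} [AddCommGroup H] [Module k H]

/-- A right (H,α)-Hom-comodule. -/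
structure HomComodule (Hb : MonoidalHomBialgebra k H) (M : Type) [AddCommGroup M] [Module k M] where
  coact : M →ₗ[k] M ⊗[k] H
  aut : M ≃ₗ[k] M
  coassoc :
    (TensorProduct.map aut.symm.toLinearMap Hb.comul) ∘ₗ coact =
      (TensorProduct.assoc k M H H).toLinearMap ∘ₗ
        (TensorProduct.map coact Hb.aut.symm.toLinearMap) ∘ₗ coact
  counit :
    (TensorProduct.rid k M).toLinearMap ∘ₗ (TensorProduct.map LinearMap.id Hb.counit) ∘ₗ coact =
      aut.symm.toLinearMap
  coact_aut :
    coact ∘ₗ aut.toLinearMap = (TensorProduct.map aut.toLinearMap Hb.aut.toLinearMap) ∘ₗ coact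

/-- A left (H,α)-Hom-comodule. -/
structure HomLeftComodule (Hb : MonoidalHomBialgebra k H) (M : Type) [AddCommGroup M] [Module k M] where
  coact : M →ₗ[k] H ⊗[k] M
  aut : M ≃ₗ[k] M
  coassoc :
    (TensorProduct.map Hb.comul aut.symm.toLinearMap) ∘ₗ coact =
      (TensorProduct.assoc k H H M).symm.toLinearMap ∘ₗ
        (TensorProduct.map Hb.aut.symm.toLinearMap coact) ∘ₗ coact
  counit :
    (TensorProduct.lid k M).toLinearMap ∘ₗ (TensorProduct.map Hb.counit LinearMap.id) ∘ₗ coact =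
      aut.symm.toLinearMap
  coact_aut :
    coact ∘ₗ aut.toLinearMap = (TensorProduct.map Hb.aut.toLinearMap aut.toLinearMap) ∘ₗ coact

/-- A right (H,α)-Hom-comodule algebra. -/
structure HomComoduleAlgebra (Hb : MonoidalHomBialgebra k H) (A : Type) [AddCommGroup A] [Module k A] where
  mul : A →ₗ[k] A →ₗ[k] A
  one : A
  aut : A ≃ₗ[k] A
  hom_assoc : ∀ a b c, mul (aut a) (mul b c) = mul (mul a b) (aut c)
  mulOne : ∀ a, mul a one = aut a
  oneMul : ∀ a, mul one a = aut a
  aut_mul : ∀ a b, aut (mul a b) = mul (aut a) (aut b)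
  aut_one : aut one = one
  coact : A →ₗ[k] A ⊗[k] H
  coassoc :
    (TensorProduct.map aut.symm.toLinearMap Hb.comul) ∘ₗ coact =
      (TensorProduct.assoc k A H H).toLinearMap ∘ₗ
        (TensorProduct.map coact Hb.aut.symm.toLinearMap) ∘ₗ coact
  counit :
    (TensorProduct.rid k A).toLinearMap ∘ₗ (TensorProduct.map LinearMap.id Hb.counit) ∘ₗ coact =
      aut.symm.toLinearMap
  coact_aut :
    coact ∘ₗ aut.toLinearMap = (TensorProduct.map aut.toLinearMap Hb.aut.toLinearMap) ∘ₗ coact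
  coact_mul :
    coact ∘ₗ TensorProduct.lift mul =
      (TensorProduct.map (TensorProduct.lift mul) (TensorProduct.lift Hb.mul)) ∘ₗ
        (TensorProduct.tensorTensorTensorComm k A H A H).toLinearMap ∘ₗ
          (TensorProduct.map coact coact)
  coact_one : coact one = one ⊗ₜ[k] Hb.one

variable {A : Type} [AddCommGroup A] [Module k A]

/-- A right (A,β)-Hom-module. -/
structure HomModule {Hb : MonoidalHomBialgebra k H} (Ac : HomComoduleAlgebra Hb A)
    (M : Type) [AddCommGroup M] [Module k M] where
  act : M →ₗ[k] A →ₗ[k] M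
  aut : M ≃ₗ[k] M
  act_act : ∀ m a b, act (act m a) (Ac.aut b) = act (aut m) (Ac.mul a b)
  act_one : ∀ m, act m Ac.one = aut m
  aut_act : ∀ m a, aut (act m a) = act (aut m) (Ac.aut a)

/-- A right Hom-module over the subalgebra of `A` carved out by `Bset`
(typically the coinvariants `B = A^{co H}`): the action is a bilinear map
`M × A → M` whose Hom-module axioms are only required on `Bset`. -/
structure HomModuleOn {Hb : MonoidalHomBialgebra k H} (Ac : HomComoduleAlgebra Hb A)
    (Bset : Set A) (M : Type) [AddCommGroup M] [Module k M] where
  act : M →ₗ[k] A →ₗ[k] M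
  aut : M ≃ₗ[k] M
  act_act : ∀ m, ∀ b ∈ Bset, ∀ b' ∈ Bset, act (act m b) (Ac.aut b') = act (aut m) (Ac.mul b b')
  act_one : ∀ m, act m Ac.one = aut m
  aut_act : ∀ m, ∀ b ∈ Bset, aut (act m b) = act (aut m) (Ac.aut b)

/-- A left Hom-module over the subalgebra of `A` carved out by `Bset`. -/
structure HomLeftModuleOn {Hb : MonoidalHomBialgebra k H} (Ac : HomComoduleAlgebra Hb A)
    (Bset : Set A) (M : Type) [AddCommGroup M] [Module k M] where
  act : A →ₗ[k] M →ₗ[k] M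
  aut : M ≃ₗ[k] M
  act_act : ∀ m, ∀ b ∈ Bset, ∀ b' ∈ Bset, act (Ac.aut b) (act b' m) = act (Ac.mul b b') (aut m)
  act_one : ∀ m, act Ac.one m = aut m
  aut_act : ∀ m, ∀ b ∈ Bset, aut (act b m) = act (Ac.aut b) (aut m)

/-- A right-right (H,A)-Hom-Hopf module (a relative Hom-Hopf module). -/
structure HomHopfModule {Hb : MonoidalHomBialgebra k H} (Ac : HomComoduleAlgebra Hb A)
    (N : Type) [AddCommGroup N] [Module k N] where
  act : N →ₗ[k] A →ₗ[k] N
  aut : N ≃ₗ[k] N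
  act_act : ∀ n a b, act (act n a) (Ac.aut b) = act (aut n) (Ac.mul a b)
  act_one : ∀ n, act n Ac.one = aut n
  aut_act : ∀ n a, aut (act n a) = act (aut n) (Ac.aut a)
  coact : N →ₗ[k] N ⊗[k] H
  coassoc :
    (TensorProduct.map aut.symm.toLinearMap Hb.comul) ∘ₗ coact =
      (TensorProduct.assoc k N H H).toLinearMap ∘ₗ
        (TensorProduct.map coact Hb.aut.symm.toLinearMap) ∘ₗ coact
  counit :
    (TensorProduct.rid k N).toLinearMap ∘ₗ (TensorProduct.map LinearMap.id Hb.counit) ∘ₗ coact =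
      aut.symm.toLinearMap
  coact_aut :
    coact ∘ₗ aut.toLinearMap = (TensorProduct.map aut.toLinearMap Hb.aut.toLinearMap) ∘ₗ coact
  compat :
    coact ∘ₗ TensorProduct.lift act =
      (TensorProduct.map (TensorProduct.lift act) (TensorProduct.lift Hb.mul)) ∘ₗ
        (TensorProduct.tensorTensorTensorComm k N H A H).toLinearMap ∘ₗ
          (TensorProduct.map coact Ac.coact)

/-- A left-right (H,A)-Hom-Hopf module. -/
structure LRHomHopfModule {Hb : MonoidalHomBialgebra k H} (Ac : HomComoduleAlgebra Hb A)
    (N : Type) [AddCommGroup N] [Module k N] where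
  act : A →ₗ[k] N →ₗ[k] N
  aut : N ≃ₗ[k] N
  act_act : ∀ n a b, act (Ac.aut a) (act b n) = act (Ac.mul a b) (aut n)
  act_one : ∀ n, act Ac.one n = aut n
  aut_act : ∀ n a, aut (act a n) = act (Ac.aut a) (aut n)
  coact : N →ₗ[k] N ⊗[k] H
  coassoc :
    (TensorProduct.map aut.symm.toLinearMap Hb.comul) ∘ₗ coact =
      (TensorProduct.assoc k N H H).toLinearMap ∘ₗ
        (TensorProduct.map coact Hb.aut.symm.toLinearMap) ∘ₗ coact
  counit :
    (TensorProduct.rid k N).toLinearMap ∘ₗ (TensorProduct.map LinearMap.id Hb.counit) ∘ₗ coact =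
      aut.symm.toLinearMap
  coact_aut :
    coact ∘ₗ aut.toLinearMap = (TensorProduct.map aut.toLinearMap Hb.aut.toLinearMap) ∘ₗ coact
  compat :
    coact ∘ₗ TensorProduct.lift act =
      (TensorProduct.map (TensorProduct.lift act) (TensorProduct.lift Hb.mul)) ∘ₗ
        (TensorProduct.tensorTensorTensorComm k A H N H).toLinearMap ∘ₗ
          (TensorProduct.map Ac.coact coact)

/-- Coinvariants (as a set) of a coaction `coact` with structure automorphism `autM`. -/
def coinvSetOf {M : Type} [AddCommGroup M] [Module k M] (oneH : H)
    (coact : M →ₗ[k] M ⊗[k] H) (autM : M ≃ₗ[k] M) : Set M :=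
  {m | coact m = autM.symm m ⊗ₜ[k] oneH}

/-- Coinvariants as a submodule. -/
def coinvSubmoduleOf {M : Type} [AddCommGroup M] [Module k M] (oneH : H)
    (coact : M →ₗ[k] M ⊗[k] H) (autM : M ≃ₗ[k] M) : Submodule k M :=
  LinearMap.ker (coact - ((TensorProduct.mk k M H).flip oneH) ∘ₗ autM.symm.toLinearMap)

/-- The coinvariants `B = A^{co H}` of a Hom-comodule algebra. -/
def coinvA {Hb : MonoidalHomBialgebra k H} (Ac : HomComoduleAlgebra Hb A) : Set A :=
  coinvSetOf Hb.one Ac.coact Ac.aut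

/-- The defining relations of the tensor product `M ⊗_B A` for a right `B`-Hom-module `M`. -/
def relSubR {M : Type} [AddCommGroup M] [Module k M]
    (mulA : A →ₗ[k] A →ₗ[k] A) (autA : A ≃ₗ[k] A) (Bset : Set A)
    (act : M →ₗ[k] A →ₗ[k] M) (autM : M ≃ₗ[k] M) : Submodule k (M ⊗[k] A) :=
  Submodule.span k
    {x | ∃ m a b, b ∈ Bset ∧ x = act m b ⊗ₜ[k] autA a - autM m ⊗ₜ[k] mulA b a}

/-- The defining relations of the tensor product `A ⊗_B M` for a left `B`-Hom-module `M`. -/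
def relSubL {M : Type} [AddCommGroup M] [Module k M]
    (mulA : A →ₗ[k] A →ₗ[k] A) (autA : A ≃ₗ[k] A) (Bset : Set A)
    (act : A →ₗ[k] M →ₗ[k] M) (autM : M ≃ₗ[k] M) : Submodule k (A ⊗[k] M) :=
  Submodule.span k
    {x | ∃ a m b, b ∈ Bset ∧ x = autA a ⊗ₜ[k] act b m - mulA a b ⊗ₜ[k] autM m}

/-- The cotensor product `X □_H V` of a right Hom-comodule and a left Hom-comodule,
as a submodule of `X ⊗ V`. -/
def cotensorSub {X V : Type} [AddCommGroup X] [Module k X] [AddCommGroup V] [Module k V]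
    (coactX : X →ₗ[k] X ⊗[k] H) (autX : X ≃ₗ[k] X)
    (coactV : V →ₗ[k] H ⊗[k] V) (autV : V ≃ₗ[k] V) : Submodule k (X ⊗[k] V) :=
  LinearMap.ker
    ((TensorProduct.map coactX autV.symm.toLinearMap) -
      ((TensorProduct.assoc k X H V).symm.toLinearMap ∘ₗ
        TensorProduct.map autX.symm.toLinearMap coactV))

/-- The canonical Galois map at the level of `A ⊗ A`:
`a ⊗ b ↦ β⁻¹(a)·b₍₀₎ ⊗ α(b₍₁₎)`. -/
def canPreLin {Hb : MonoidalHomBialgebra k H} (Ac : HomComoduleAlgebra Hb A) :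
    A ⊗[k] A →ₗ[k] A ⊗[k] H :=
  (TensorProduct.map (TensorProduct.lift Ac.mul) Hb.aut.toLinearMap) ∘ₗ
    (TensorProduct.assoc k A A H).symm.toLinearMap ∘ₗ
      (TensorProduct.map Ac.aut.symm.toLinearMap Ac.coact)

/-- The second canonical Galois map at the level of `A ⊗ A`:
`a ⊗ b ↦ a₍₀₎·β⁻¹(b) ⊗ α(a₍₁₎)`. -/
def canPreLin' {Hb : MonoidalHomBialgebra k H} (Ac : HomComoduleAlgebra Hb A) :
    A ⊗[k] A →ₗ[k] A ⊗[k] H :=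
  (TensorProduct.map (TensorProduct.lift Ac.mul) Hb.aut.toLinearMap) ∘ₗ
    (TensorProduct.assoc k A A H).symm.toLinearMap ∘ₗ
      (TensorProduct.map LinearMap.id (TensorProduct.comm k H A).toLinearMap) ∘ₗ
        (TensorProduct.assoc k A H A).toLinearMap ∘ₗ
          (TensorProduct.map Ac.coact Ac.aut.symm.toLinearMap)

/-- `φ : H → A` is a total integral. -/
def IsTotalIntegral {Hb : MonoidalHomBialgebra k H} (Ac : HomComoduleAlgebra Hb A)
    (φ : H →ₗ[k] A) : Prop :=
  φ ∘ₗ Hb.aut.toLinearMap = Ac.aut.toLinearMap ∘ₗ φ ∧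
    Ac.coact ∘ₗ φ = (TensorProduct.map φ LinearMap.id) ∘ₗ Hb.comul ∧
      φ Hb.one = Ac.one

/-- The Hom-comodule structure on `M ⊗ A` inducing that of `M ⊗_B A`:
`m ⊗ a ↦ (μ⁻¹(m) ⊗ a₍₀₎) ⊗ α(a₍₁₎)`. -/
def quotCoactPreR {Hb : MonoidalHomBialgebra k H} (Ac : HomComoduleAlgebra Hb A)
    {M : Type} [AddCommGroup M] [Module k M] (autM : M ≃ₗ[k] M) :
    (M ⊗[k] A) →ₗ[k] (M ⊗[k] A) ⊗[k] H :=
  (TensorProduct.assoc k M A H).symm.toLinearMap ∘ₗ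
    TensorProduct.map autM.symm.toLinearMap
      ((TensorProduct.map LinearMap.id Hb.aut.toLinearMap) ∘ₗ Ac.coact)

/-- The Hom-comodule structure on `A ⊗ M` inducing that of `A ⊗_B M`:
`a ⊗ m ↦ (a₍₀₎ ⊗ μ⁻¹(m)) ⊗ α(a₍₁₎)`. -/
def quotCoactPreL {Hb : MonoidalHomBialgebra k H} (Ac : HomComoduleAlgebra Hb A)
    {M : Type} [AddCommGroup M] [Module k M] (autM : M ≃ₗ[k] M) :
    (A ⊗[k] M) →ₗ[k] (A ⊗[k] M) ⊗[k] H :=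
  (TensorProduct.assoc k A M H).symm.toLinearMap ∘ₗ
    (TensorProduct.map LinearMap.id (TensorProduct.comm k H M).toLinearMap) ∘ₗ
      (TensorProduct.assoc k A H M).toLinearMap ∘ₗ
        TensorProduct.map
          ((TensorProduct.map LinearMap.id Hb.aut.toLinearMap) ∘ₗ Ac.coact)
          autM.symm.toLinearMap

/-- Bijectivity of the adjunction unit `η_M : M → (M ⊗_B A)^{co H}`, `m ↦ μ⁻¹(m) ⊗ 1_A`,
for a right `B`-Hom-module `M`.  Since the Hom-comodule structure of `M ⊗_B A` is the
one induced from `M ⊗ A`, it is quantified over all maps `ρbar` (resp. `θ`) induced by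
the comodule structure (resp. by `μ⁻¹ ⊗ β⁻¹`) on `M ⊗ A`. -/
def UnitBijectiveR {Hb : MonoidalHomBialgebra k H} (Ac : HomComoduleAlgebra Hb A)
    (Bset : Set A) {M : Type} [AddCommGroup M] [Module k M]
    (S : HomModuleOn Ac Bset M) : Prop :=
  ∀ (ρbar : ((M ⊗[k] A) ⧸ relSubR Ac.mul Ac.aut Bset S.act S.aut) →ₗ[k]
      ((M ⊗[k] A) ⧸ relSubR Ac.mul Ac.aut Bset S.act S.aut) ⊗[k] H)
    (θ : ((M ⊗[k] A) ⧸ relSubR Ac.mul Ac.aut Bset S.act S.aut) →ₗ[k]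
      ((M ⊗[k] A) ⧸ relSubR Ac.mul Ac.aut Bset S.act S.aut)),
    ρbar ∘ₗ (relSubR Ac.mul Ac.aut Bset S.act S.aut).mkQ =
      (TensorProduct.map (relSubR Ac.mul Ac.aut Bset S.act S.aut).mkQ LinearMap.id) ∘ₗ
        quotCoactPreR Ac S.aut →
    θ ∘ₗ (relSubR Ac.mul Ac.aut Bset S.act S.aut).mkQ =
      (relSubR Ac.mul Ac.aut Bset S.act S.aut).mkQ ∘ₗ
        TensorProduct.map S.aut.symm.toLinearMap Ac.aut.symm.toLinearMap →
    ((∀ m : M, ρbar ((relSubR Ac.mul Ac.aut Bset S.act S.aut).mkQ (S.aut.symm m ⊗ₜ[k] Ac.one)) =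
        θ ((relSubR Ac.mul Ac.aut Bset S.act S.aut).mkQ (S.aut.symm m ⊗ₜ[k] Ac.one)) ⊗ₜ[k] Hb.one) ∧
      Function.Injective
        (fun m : M => (relSubR Ac.mul Ac.aut Bset S.act S.aut).mkQ (S.aut.symm m ⊗ₜ[k] Ac.one)) ∧
      ∀ x, ρbar x = θ x ⊗ₜ[k] Hb.one →
        ∃ m : M, (relSubR Ac.mul Ac.aut Bset S.act S.aut).mkQ (S.aut.symm m ⊗ₜ[k] Ac.one) = x)

/-- The relations of `N^{co H} ⊗_B A` for a right (H,A)-Hom-Hopf module `N`;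
the closure of the coinvariants under the `B`-action and the automorphism is
encoded by existential membership. -/
def relCoinvR {Hb : MonoidalHomBialgebra k H} (Ac : HomComoduleAlgebra Hb A)
    (Bset : Set A) {N : Type} [AddCommGroup N] [Module k N]
    (P : HomHopfModule Ac N) :
    Submodule k ((coinvSubmoduleOf Hb.one P.coact P.aut : Submodule k N) ⊗[k] A) :=
  Submodule.span k
    {x | ∃ (n n' n'' : coinvSubmoduleOf Hb.one P.coact P.aut) (a b : A), b ∈ Bset ∧
      (n' : N) = P.act n b ∧ (n'' : N) = P.aut n ∧
      x = n' ⊗ₜ[k] Ac.aut a - n'' ⊗ₜ[k] Ac.mul b a}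

/-- The counit of the adjunction at the level of `N^{co H} ⊗ A`: `n ⊗ a ↦ n · a`. -/
def counitPre {Hb : MonoidalHomBialgebra k H} (Ac : HomComoduleAlgebra Hb A)
    {N : Type} [AddCommGroup N] [Module k N] (P : HomHopfModule Ac N) :
    ((coinvSubmoduleOf Hb.one P.coact P.aut : Submodule k N) ⊗[k] A) →ₗ[k] N :=
  TensorProduct.lift (P.act ∘ₗ (coinvSubmoduleOf Hb.one P.coact P.aut).subtype)

/-- Bijectivity of the adjunction counit `ε_N : N^{co H} ⊗_B A → N`, `n ⊗ a ↦ n·a`: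
equivalently, the lift `N^{co H} ⊗ A → N` is surjective and its kernel is exactly
the defining relations of `⊗_B`. -/
def CounitBijectiveR {Hb : MonoidalHomBialgebra k H} (Ac : HomComoduleAlgebra Hb A)
    (Bset : Set A) {N : Type} [AddCommGroup N] [Module k N]
    (P : HomHopfModule Ac N) : Prop :=
  Function.Surjective (counitPre Ac P) ∧ LinearMap.ker (counitPre Ac P) = relCoinvR Ac Bset P

/-- Bijectivity of the adjunction unit `η'_M : M → (A ⊗_B M)^{co H}`, `m ↦ 1_A ⊗ μ⁻¹(m)`,
for a left `B`-Hom-module `M`. -/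
def UnitBijectiveL {Hb : MonoidalHomBialgebra k H} (Ac : HomComoduleAlgebra Hb A)
    (Bset : Set A) {M : Type} [AddCommGroup M] [Module k M]
    (S : HomLeftModuleOn Ac Bset M) : Prop :=
  ∀ (ρbar : ((A ⊗[k] M) ⧸ relSubL Ac.mul Ac.aut Bset S.act S.aut) →ₗ[k]
      ((A ⊗[k] M) ⧸ relSubL Ac.mul Ac.aut Bset S.act S.aut) ⊗[k] H)
    (θ : ((A ⊗[k] M) ⧸ relSubL Ac.mul Ac.aut Bset S.act S.aut) →ₗ[k]
      ((A ⊗[k] M) ⧸ relSubL Ac.mul Ac.aut Bset S.act S.aut)),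
    ρbar ∘ₗ (relSubL Ac.mul Ac.aut Bset S.act S.aut).mkQ =
      (TensorProduct.map (relSubL Ac.mul Ac.aut Bset S.act S.aut).mkQ LinearMap.id) ∘ₗ
        quotCoactPreL Ac S.aut →
    θ ∘ₗ (relSubL Ac.mul Ac.aut Bset S.act S.aut).mkQ =
      (relSubL Ac.mul Ac.aut Bset S.act S.aut).mkQ ∘ₗ
        TensorProduct.map Ac.aut.symm.toLinearMap S.aut.symm.toLinearMap →
    ((∀ m : M, ρbar ((relSubL Ac.mul Ac.aut Bset S.act S.aut).mkQ (Ac.one ⊗ₜ[k] S.aut.symm m)) =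
        θ ((relSubL Ac.mul Ac.aut Bset S.act S.aut).mkQ (Ac.one ⊗ₜ[k] S.aut.symm m)) ⊗ₜ[k] Hb.one) ∧
      Function.Injective
        (fun m : M => (relSubL Ac.mul Ac.aut Bset S.act S.aut).mkQ (Ac.one ⊗ₜ[k] S.aut.symm m)) ∧
      ∀ x, ρbar x = θ x ⊗ₜ[k] Hb.one →
        ∃ m : M, (relSubL Ac.mul Ac.aut Bset S.act S.aut).mkQ (Ac.one ⊗ₜ[k] S.aut.symm m) = x)

/-- The relations of `A ⊗_B N^{co H}` for a left-right (H,A)-Hom-Hopf module `N`. -/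
def relCoinvL {Hb : MonoidalHomBialgebra k H} (Ac : HomComoduleAlgebra Hb A)
    (Bset : Set A) {N : Type} [AddCommGroup N] [Module k N]
    (P : LRHomHopfModule Ac N) :
    Submodule k (A ⊗[k] (coinvSubmoduleOf Hb.one P.coact P.aut : Submodule k N)) :=
  Submodule.span k
    {x | ∃ (n n' n'' : coinvSubmoduleOf Hb.one P.coact P.aut) (a b : A), b ∈ Bset ∧
      (n' : N) = P.act b n ∧ (n'' : N) = P.aut n ∧
      x = Ac.aut a ⊗ₜ[k] n' - Ac.mul a b ⊗ₜ[k] n''}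

/-- The counit at the level of `A ⊗ N^{co H}`: `a ⊗ n ↦ a · n`. -/
def counitPreL {Hb : MonoidalHomBialgebra k H} (Ac : HomComoduleAlgebra Hb A)
    {N : Type} [AddCommGroup N] [Module k N] (P : LRHomHopfModule Ac N) :
    (A ⊗[k] (coinvSubmoduleOf Hb.one P.coact P.aut : Submodule k N)) →ₗ[k] N :=
  TensorProduct.lift (P.act.compl₂ (coinvSubmoduleOf Hb.one P.coact P.aut).subtype)

/-- Bijectivity of the counit `ε'_N : A ⊗_B N^{co H} → N`. -/
def CounitBijectiveL {Hb : MonoidalHomBialgebra k H} (Ac : HomComoduleAlgebra Hb A)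
    (Bset : Set A) {N : Type} [AddCommGroup N] [Module k N]
    (P : LRHomHopfModule Ac N) : Prop :=
  Function.Surjective (counitPreL Ac P) ∧ LinearMap.ker (counitPreL Ac P) = relCoinvL Ac Bset P

/-- A morphism of right `B`-Hom-modules. -/
def IsHomModuleOnHomR {Hb : MonoidalHomBialgebra k H} (Ac : HomComoduleAlgebra Hb A)
    (Bset : Set A) {M₁ M₂ : Type} [AddCommGroup M₁] [Module k M₁] [AddCommGroup M₂] [Module k M₂]
    (S₁ : HomModuleOn Ac Bset M₁) (S₂ : HomModuleOn Ac Bset M₂) (f : M₁ →ₗ[k] M₂) : Prop :=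
  (∀ m, ∀ b ∈ Bset, f (S₁.act m b) = S₂.act (f m) b) ∧ ∀ m, f (S₁.aut m) = S₂.aut (f m)

/-- A morphism of left `B`-Hom-modules. -/
def IsHomModuleOnHomL {Hb : MonoidalHomBialgebra k H} (Ac : HomComoduleAlgebra Hb A)
    (Bset : Set A) {M₁ M₂ : Type} [AddCommGroup M₁] [Module k M₁] [AddCommGroup M₂] [Module k M₂]
    (S₁ : HomLeftModuleOn Ac Bset M₁) (S₂ : HomLeftModuleOn Ac Bset M₂) (f : M₁ →ₗ[k] M₂) : Prop :=
  (∀ m, ∀ b ∈ Bset, f (S₁.act b m) = S₂.act b (f m)) ∧ ∀ m, f (S₁.aut m) = S₂.aut (f m)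

/-- `A` is faithfully flat as a left `B`-Hom-module: the induced functor `− ⊗_B A`
on right `B`-Hom-modules preserves and reflects exactness. -/
def FaithfullyFlatLeftOf {Hb : MonoidalHomBialgebra k H} (Ac : HomComoduleAlgebra Hb A)
    (Bset : Set A) : Prop :=
  ∀ (M₁ M₂ M₃ : Type) [AddCommGroup M₁] [Module k M₁] [AddCommGroup M₂] [Module k M₂]
    [AddCommGroup M₃] [Module k M₃]
    (S₁ : HomModuleOn Ac Bset M₁) (S₂ : HomModuleOn Ac Bset M₂) (S₃ : HomModuleOn Ac Bset M₃)
    (f : M₁ →ₗ[k] M₂) (g : M₂ →ₗ[k] M₃),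
    IsHomModuleOnHomR Ac Bset S₁ S₂ f → IsHomModuleOnHomR Ac Bset S₂ S₃ g →
    ∀ (fbar : ((M₁ ⊗[k] A) ⧸ relSubR Ac.mul Ac.aut Bset S₁.act S₁.aut) →ₗ[k]
        ((M₂ ⊗[k] A) ⧸ relSubR Ac.mul Ac.aut Bset S₂.act S₂.aut))
      (gbar : ((M₂ ⊗[k] A) ⧸ relSubR Ac.mul Ac.aut Bset S₂.act S₂.aut) →ₗ[k]
        ((M₃ ⊗[k] A) ⧸ relSubR Ac.mul Ac.aut Bset S₃.act S₃.aut)),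
      fbar ∘ₗ (relSubR Ac.mul Ac.aut Bset S₁.act S₁.aut).mkQ =
        (relSubR Ac.mul Ac.aut Bset S₂.act S₂.aut).mkQ ∘ₗ TensorProduct.map f LinearMap.id →
      gbar ∘ₗ (relSubR Ac.mul Ac.aut Bset S₂.act S₂.aut).mkQ =
        (relSubR Ac.mul Ac.aut Bset S₃.act S₃.aut).mkQ ∘ₗ TensorProduct.map g LinearMap.id →
      (LinearMap.range f = LinearMap.ker g ↔ LinearMap.range fbar = LinearMap.ker gbar)

/-- `A` is faithfully flat as a right `B`-Hom-module: the induced functor `A ⊗_B −`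
on left `B`-Hom-modules preserves and reflects exactness. -/
def FaithfullyFlatRightOf {Hb : MonoidalHomBialgebra k H} (Ac : HomComoduleAlgebra Hb A)
    (Bset : Set A) : Prop :=
  ∀ (M₁ M₂ M₃ : Type) [AddCommGroup M₁] [Module k M₁] [AddCommGroup M₂] [Module k M₂]
    [AddCommGroup M₃] [Module k M₃]
    (S₁ : HomLeftModuleOn Ac Bset M₁) (S₂ : HomLeftModuleOn Ac Bset M₂)
    (S₃ : HomLeftModuleOn Ac Bset M₃)
    (f : M₁ →ₗ[k] M₂) (g : M₂ →ₗ[k] M₃),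
    IsHomModuleOnHomL Ac Bset S₁ S₂ f → IsHomModuleOnHomL Ac Bset S₂ S₃ g →
    ∀ (fbar : ((A ⊗[k] M₁) ⧸ relSubL Ac.mul Ac.aut Bset S₁.act S₁.aut) →ₗ[k]
        ((A ⊗[k] M₂) ⧸ relSubL Ac.mul Ac.aut Bset S₂.act S₂.aut))
      (gbar : ((A ⊗[k] M₂) ⧸ relSubL Ac.mul Ac.aut Bset S₂.act S₂.aut) →ₗ[k]
        ((A ⊗[k] M₃) ⧸ relSubL Ac.mul Ac.aut Bset S₃.act S₃.aut)),
      fbar ∘ₗ (relSubL Ac.mul Ac.aut Bset S₁.act S₁.aut).mkQ =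
        (relSubL Ac.mul Ac.aut Bset S₂.act S₂.aut).mkQ ∘ₗ TensorProduct.map LinearMap.id f →
      gbar ∘ₗ (relSubL Ac.mul Ac.aut Bset S₂.act S₂.aut).mkQ =
        (relSubL Ac.mul Ac.aut Bset S₃.act S₃.aut).mkQ ∘ₗ TensorProduct.map LinearMap.id g →
      (LinearMap.range f = LinearMap.ker g ↔ LinearMap.range fbar = LinearMap.ker gbar)

/-- `A` is flat as a left `B`-Hom-module: `− ⊗_B A` preserves exactness. -/
def FlatLeftOf {Hb : MonoidalHomBialgebra k H} (Ac : HomComoduleAlgebra Hb A)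
    (Bset : Set A) : Prop :=
  ∀ (M₁ M₂ M₃ : Type) [AddCommGroup M₁] [Module k M₁] [AddCommGroup M₂] [Module k M₂]
    [AddCommGroup M₃] [Module k M₃]
    (S₁ : HomModuleOn Ac Bset M₁) (S₂ : HomModuleOn Ac Bset M₂) (S₃ : HomModuleOn Ac Bset M₃)
    (f : M₁ →ₗ[k] M₂) (g : M₂ →ₗ[k] M₃),
    IsHomModuleOnHomR Ac Bset S₁ S₂ f → IsHomModuleOnHomR Ac Bset S₂ S₃ g →
    ∀ (fbar : ((M₁ ⊗[k] A) ⧸ relSubR Ac.mul Ac.aut Bset S₁.act S₁.aut) →ₗ[k]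
        ((M₂ ⊗[k] A) ⧸ relSubR Ac.mul Ac.aut Bset S₂.act S₂.aut))
      (gbar : ((M₂ ⊗[k] A) ⧸ relSubR Ac.mul Ac.aut Bset S₂.act S₂.aut) →ₗ[k]
        ((M₃ ⊗[k] A) ⧸ relSubR Ac.mul Ac.aut Bset S₃.act S₃.aut)),
      fbar ∘ₗ (relSubR Ac.mul Ac.aut Bset S₁.act S₁.aut).mkQ =
        (relSubR Ac.mul Ac.aut Bset S₂.act S₂.aut).mkQ ∘ₗ TensorProduct.map f LinearMap.id →
      gbar ∘ₗ (relSubR Ac.mul Ac.aut Bset S₂.act S₂.aut).mkQ =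
        (relSubR Ac.mul Ac.aut Bset S₃.act S₃.aut).mkQ ∘ₗ TensorProduct.map g LinearMap.id →
      (LinearMap.range f = LinearMap.ker g → LinearMap.range fbar = LinearMap.ker gbar)

end

/-! Write `(a ⊗ g) · (b ⊗ h) = ab ⊗ gh` on `A ⊗ H`. Then `can (a ⊗ b) = (β⁻¹(a) ⊗ 1) · ρ(b)` and
`can' (a ⊗ b) = ρ(a) · (β⁻¹(b) ⊗ 1)`, so `can' = f ∘ can` follows from the semilinearity
`f ((a ⊗ 1) · x) = ρ(β(a)) · f x` and the value `f (ρ(b)) = β⁻¹(b) ⊗ 1`. Moreover `f` is `id ⊗ S`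
followed by the shear `m ⊗ h ↦ β(m₍₀₎) ⊗ m₍₁₎ α⁻¹(h)`, and replacing `m₍₁₎` by `S(m₍₁₎)` inverts
the shear; hence `f` is bijective as soon as `S` is. -/

noncomputable section

variable {k : Type} [Field k] {H : Type} [AddCommGroup H] [Module k H]

namespace MonoidalHomBialgebra

variable (Hb : MonoidalHomBialgebra k H)

/-- The convolution product `h ↦ P(h₁) Q(h₂)` of endomorphisms of a Hom-bialgebra. -/
def conv (P Q : H →ₗ[k] H) : H →ₗ[k] H :=
  lift Hb.mul ∘ₗ map P Q ∘ₗ Hb.comul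

/-- The neutral element `h ↦ ε(h) 1` for convolution. -/
def convOne : H →ₗ[k] H :=
  LinearMap.toSpanSingleton k H Hb.one ∘ₗ Hb.counit

/-- Right multiplication `x ↦ x · (1 ⊗ g)` on `M ⊗ H`, for a module `M` with automorphism `β`;
multiplying by `1` in a Hom-algebra applies the structure automorphism, hence the `β`. -/
def tensorMulRight {M : Type} [AddCommGroup M] [Module k M] (β : M ≃ₗ[k] M) (g : H) :
    M ⊗[k] H →ₗ[k] M ⊗[k] H :=
  map β.toLinearMap (Hb.mul.flip g)

lemma map_lift_mul_assoc_tmul {M : Type} [AddCommGroup M] [Module k M] (β : M ≃ₗ[k] M)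
    (x : M ⊗[k] H) (g : H) :
    map β.toLinearMap (lift Hb.mul) (TensorProduct.assoc k M H H (x ⊗ₜ g)) =
      Hb.tensorMulRight β g x := by
  induction x with
  | zero => simp
  | add x y hx hy => simp only [add_tmul, map_add, hx, hy]
  | tmul m h => simp [tensorMulRight]

lemma aut_symm_mul (g h : H) :
    Hb.aut.symm (Hb.mul g h) = Hb.mul (Hb.aut.symm g) (Hb.aut.symm h) := by
  rw [LinearEquiv.symm_apply_eq, Hb.aut_mul, LinearEquiv.apply_symm_apply,
    LinearEquiv.apply_symm_apply]

lemma aut_symm_comp_of_comp_aut {Q : H →ₗ[k] H}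
    (hQ : Q ∘ₗ Hb.aut.toLinearMap = Hb.aut.toLinearMap ∘ₗ Q) :
    Hb.aut.symm.toLinearMap ∘ₗ Q = Q ∘ₗ Hb.aut.symm.toLinearMap := by
  rw [LinearEquiv.toLinearMap_symm_comp_eq, ← LinearMap.comp_assoc, ← hQ, LinearMap.comp_assoc,
    LinearEquiv.comp_symm, LinearMap.comp_id]

end MonoidalHomBialgebra

namespace HomComodule

variable {Hb : MonoidalHomBialgebra k H} {M : Type} [AddCommGroup M] [Module k M]
  (C : HomComodule Hb M) {P Q : H →ₗ[k] H}

lemma coact_aut_apply (m : M) :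
    C.coact (C.aut m) = map C.aut.toLinearMap Hb.aut.toLinearMap (C.coact m) :=
  LinearMap.congr_fun C.coact_aut m

lemma map_convOne_coact (m : M) :
    map LinearMap.id Hb.convOne (C.coact m) = C.aut.symm m ⊗ₜ Hb.one := by
  have naturality : map LinearMap.id Hb.convOne =
      (TensorProduct.mk k M H).flip Hb.one ∘ₗ (TensorProduct.rid k M).toLinearMap ∘ₗ
        map LinearMap.id Hb.counit := by
    ext m h
    simp [MonoidalHomBialgebra.convOne]
  rw [naturality]
  exact congrArg (· ⊗ₜ Hb.one) (LinearMap.congr_fun C.counit m)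

/-- The shear `m ⊗ h ↦ β(m₍₀₎) ⊗ P(m₍₁₎) α⁻¹(h)` of `M ⊗ H`, where `β` is the automorphism
of `M`. The shears along `id` and along the antipode are mutually inverse. -/
def shear (P : H →ₗ[k] H) : M ⊗[k] H →ₗ[k] M ⊗[k] H :=
  map C.aut.toLinearMap (lift Hb.mul) ∘ₗ (TensorProduct.assoc k M H H).toLinearMap ∘ₗ
    map (map LinearMap.id P ∘ₗ C.coact) Hb.aut.symm.toLinearMap

lemma shear_tmul (m : M) (h : H) :
    C.shear P (m ⊗ₜ h) =
      Hb.tensorMulRight C.aut (Hb.aut.symm h) (map LinearMap.id P (C.coact m)) :=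
  Hb.map_lift_mul_assoc_tmul C.aut _ _

lemma shear_tensorMulRight (hP : P ∘ₗ Hb.aut.toLinearMap = Hb.aut.toLinearMap ∘ₗ P) (g : H)
    (x : M ⊗[k] H) :
    C.shear P (Hb.tensorMulRight C.aut g x) = Hb.tensorMulRight C.aut g (C.shear P x) := by
  induction x with
  | zero => simp
  | add x y hx hy => simp only [map_add, hx, hy]
  | tmul m h =>
    have mul_assoc_twisted :
        Hb.mul.flip (Hb.aut.symm (Hb.mul h g)) ∘ₗ P ∘ₗ Hb.aut.toLinearMap =
          Hb.mul.flip g ∘ₗ Hb.mul.flip (Hb.aut.symm h) ∘ₗ P := by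
      obtain ⟨g, rfl⟩ := Hb.aut.surjective g
      rw [hP]
      ext h'
      simp [Hb.aut_symm_mul, Hb.hom_assoc]
    rw [shear_tmul, MonoidalHomBialgebra.tensorMulRight, map_tmul, shear_tmul]
    simp only [LinearEquiv.coe_coe, LinearMap.flip_apply, coact_aut_apply,
      MonoidalHomBialgebra.tensorMulRight, map_map, LinearMap.id_comp, LinearMap.comp_id,
      mul_assoc_twisted]

lemma shear_map_coact (hQ : Q ∘ₗ Hb.aut.toLinearMap = Hb.aut.toLinearMap ∘ₗ Q)
    (hPQ : Hb.conv P Q = Hb.convOne) (m : M) :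
    C.shear P (map LinearMap.id Q (C.coact m)) = C.aut.symm m ⊗ₜ Hb.one := by
  have coassoc := LinearMap.congr_fun C.coassoc m
  simp only [LinearMap.comp_apply, LinearEquiv.coe_coe] at coassoc
  calc
    _ = map C.aut.toLinearMap (lift Hb.mul) (TensorProduct.assoc k M H H
          (map (map LinearMap.id P) Q
            (map C.coact Hb.aut.symm.toLinearMap (C.coact m)))) := by
      simp only [shear, LinearMap.comp_apply, LinearEquiv.coe_coe, map_map, LinearMap.comp_id,
        Hb.aut_symm_comp_of_comp_aut hQ]
    _ = map C.aut.toLinearMap (lift Hb.mul ∘ₗ map P Q)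
          (map C.aut.symm.toLinearMap Hb.comul (C.coact m)) := by
      rw [← map_map_assoc, ← coassoc, map_map, LinearMap.comp_id]
    _ = map LinearMap.id (Hb.conv P Q) (C.coact m) := by
      rw [map_map, LinearEquiv.comp_symm, MonoidalHomBialgebra.conv, LinearMap.comp_assoc]
    _ = _ := by rw [hPQ, C.map_convOne_coact]

lemma shear_comp_shear (hP : P ∘ₗ Hb.aut.toLinearMap = Hb.aut.toLinearMap ∘ₗ P)
    (hQ : Q ∘ₗ Hb.aut.toLinearMap = Hb.aut.toLinearMap ∘ₗ Q)
    (hPQ : Hb.conv P Q = Hb.convOne) :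
    C.shear P ∘ₗ C.shear Q = LinearMap.id := by
  refine TensorProduct.ext' fun m h => ?_
  rw [LinearMap.comp_apply, shear_tmul, C.shear_tensorMulRight hP, C.shear_map_coact hQ hPQ]
  simp [MonoidalHomBialgebra.tensorMulRight, Hb.oneMul]

section Antipode

variable {Hh : MonoidalHomHopf k H} (C : HomComodule Hh.toMonoidalHomBialgebra M)

/-- The shear along the identity, `m ⊗ h ↦ β(m₍₀₎) ⊗ m₍₁₎ α⁻¹(h)`, as an automorphism of
`M ⊗ H`; its inverse is the shear along the antipode. -/
def shearEquiv : M ⊗[k] H ≃ₗ[k] M ⊗[k] H :=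
  LinearEquiv.ofLinearMap (C.shear LinearMap.id) (C.shear Hh.antipode)
    (C.shear_comp_shear rfl Hh.antipode_aut Hh.antipode_mul_right)
    (C.shear_comp_shear Hh.antipode_aut rfl Hh.antipode_mul_left)

/-- The map `f : m ⊗ h ↦ β(m₍₀₎) ⊗ m₍₁₎ S(α⁻¹(h))` comparing the two canonical maps. -/
def antipodeShear : M ⊗[k] H →ₗ[k] M ⊗[k] H :=
  map C.aut.toLinearMap (lift Hh.mul) ∘ₗ (TensorProduct.assoc k M H H).toLinearMap ∘ₗ
    map C.coact (Hh.antipode ∘ₗ Hh.aut.symm.toLinearMap)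

lemma antipodeShear_tmul (m : M) (h : H) :
    C.antipodeShear (m ⊗ₜ h) =
      Hh.tensorMulRight C.aut (Hh.antipode (Hh.aut.symm h)) (C.coact m) :=
  Hh.map_lift_mul_assoc_tmul C.aut _ _

lemma antipodeShear_eq_shear_comp :
    C.antipodeShear = C.shear LinearMap.id ∘ₗ map LinearMap.id Hh.antipode := by
  simp only [antipodeShear, shear, map_id, LinearMap.id_comp, LinearMap.comp_assoc, ← map_comp,
    LinearMap.comp_id, Hh.aut_symm_comp_of_comp_aut Hh.antipode_aut]

lemma antipodeShear_coact (m : M) :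
    C.antipodeShear (C.coact m) = C.aut.symm m ⊗ₜ Hh.one := by
  rw [antipodeShear_eq_shear_comp]
  exact C.shear_map_coact Hh.antipode_aut Hh.antipode_mul_right m

lemma antipodeShear_bijective (hS : Function.Bijective Hh.antipode) :
    Function.Bijective C.antipodeShear := by
  rw [antipodeShear_eq_shear_comp]
  exact ((congr (LinearEquiv.refl k M) (LinearEquiv.ofBijective Hh.antipode hS)).trans
    C.shearEquiv).bijective

end Antipode

end HomComodule

namespace HomComoduleAlgebra

variable {A : Type} [AddCommGroup A] [Module k A]

section Bialgebra

variable {Hb : MonoidalHomBialgebra k H} (Ac : HomComoduleAlgebra Hb A)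

/-- The Hom-comodule underlying a Hom-comodule algebra. -/
def toHomComodule : HomComodule Hb A where
  coact := Ac.coact
  aut := Ac.aut
  coassoc := Ac.coassoc
  counit := Ac.counit
  coact_aut := Ac.coact_aut

lemma coact_mul_apply (a b : A) :
    Ac.coact (Ac.mul a b) = map₂ Ac.mul Hb.mul (Ac.coact a) (Ac.coact b) := by
  have interchange :
      map (lift Ac.mul) (lift Hb.mul) ∘ₗ
          (TensorProduct.tensorTensorTensorComm k A H A H).toLinearMap =
        lift (map₂ Ac.mul Hb.mul) := by
    ext a g b h
    simp [map₂_apply_tmul]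
  exact (LinearMap.congr_fun Ac.coact_mul (a ⊗ₜ b)).trans
    (LinearMap.congr_fun interchange (Ac.coact a ⊗ₜ Ac.coact b))

lemma tensorMulRight_map₂ (g : H) (x y : A ⊗[k] H) :
    Hb.tensorMulRight Ac.aut (Hb.aut g) (map₂ Ac.mul Hb.mul x y) =
      map₂ Ac.mul Hb.mul (map Ac.aut.toLinearMap Hb.aut.toLinearMap x)
        (Hb.tensorMulRight Ac.aut g y) := by
  induction x with
  | zero => simp
  | add x x' hx hx' => simp only [map_add, LinearMap.add_apply, hx, hx']
  | tmul a h =>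
    induction y with
    | zero => simp
    | add y y' hy hy' => simp only [map_add, hy, hy']
    | tmul b h' =>
      simp [map₂_apply_tmul, MonoidalHomBialgebra.tensorMulRight, Ac.aut_mul, Hb.hom_assoc]

lemma canPreLin_tmul (a b : A) :
    canPreLin Ac (a ⊗ₜ b) =
      map₂ Ac.mul Hb.mul (Ac.aut.symm a ⊗ₜ Hb.one) (Ac.coact b) := by
  have one_mul : Hb.mul Hb.one = Hb.aut.toLinearMap := LinearMap.ext Hb.oneMul
  simp only [canPreLin, LinearMap.comp_apply, map_tmul, LinearEquiv.coe_coe, map₂_apply_tmul,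
    one_mul]
  induction Ac.coact b with
  | zero => simp
  | add x y hx hy => simp only [tmul_add, map_add, hx, hy]
  | tmul b h => simp

lemma canPreLin'_tmul (a b : A) :
    canPreLin' Ac (a ⊗ₜ b) =
      map₂ Ac.mul Hb.mul (Ac.coact a) (Ac.aut.symm b ⊗ₜ Hb.one) := by
  simp only [canPreLin', LinearMap.comp_apply, map_tmul, LinearEquiv.coe_coe]
  induction Ac.coact a with
  | zero => simp
  | add x y hx hy => simp only [add_tmul, map_add, LinearMap.add_apply, hx, hy]
  | tmul a h => simp [map₂_apply_tmul, Hb.mulOne]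

end Bialgebra

variable {Hh : MonoidalHomHopf k H} (Ac : HomComoduleAlgebra Hh.toMonoidalHomBialgebra A)

lemma antipodeShear_mul_left (a : A) (x : A ⊗[k] H) :
    Ac.toHomComodule.antipodeShear (map₂ Ac.mul Hh.mul (a ⊗ₜ Hh.one) x) =
      map₂ Ac.mul Hh.mul (Ac.coact (Ac.aut a)) (Ac.toHomComodule.antipodeShear x) := by
  induction x with
  | zero => simp
  | add x y hx hy => simp only [map_add, hx, hy]
  | tmul b h =>
    have antipode_eq : Hh.antipode h = Hh.aut (Hh.antipode (Hh.aut.symm h)) := by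
      simpa using LinearMap.congr_fun Hh.antipode_aut (Hh.aut.symm h)
    calc
      _ = Hh.tensorMulRight Ac.aut (Hh.antipode h) (Ac.coact (Ac.mul a b)) := by
        rw [map₂_apply_tmul, map_tmul, Hh.oneMul, HomComodule.antipodeShear_tmul,
          LinearEquiv.symm_apply_apply]
        rfl
      _ = map₂ Ac.mul Hh.mul (map Ac.aut.toLinearMap Hh.aut.toLinearMap (Ac.coact a))
            (Hh.tensorMulRight Ac.aut (Hh.antipode (Hh.aut.symm h)) (Ac.coact b)) := by
        rw [coact_mul_apply, antipode_eq, tensorMulRight_map₂]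
      _ = _ := by
        rw [HomComodule.antipodeShear_tmul]
        exact congrArg (map₂ Ac.mul Hh.mul · _) (Ac.toHomComodule.coact_aut_apply a).symm

theorem antipodeShear_comp_canPreLin :
    Ac.toHomComodule.antipodeShear ∘ₗ canPreLin Ac = canPreLin' Ac := by
  refine TensorProduct.ext' fun a b => ?_
  calc
    _ = Ac.toHomComodule.antipodeShear
          (map₂ Ac.mul Hh.mul (Ac.aut.symm a ⊗ₜ Hh.one) (Ac.coact b)) := by
      rw [LinearMap.comp_apply, canPreLin_tmul]
    _ = map₂ Ac.mul Hh.mul (Ac.coact a) (Ac.toHomComodule.antipodeShear (Ac.coact b)) := by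
      rw [antipodeShear_mul_left, LinearEquiv.apply_symm_apply]
    _ = map₂ Ac.mul Hh.mul (Ac.coact a) (Ac.aut.symm b ⊗ₜ Hh.one) :=
      congrArg _ (Ac.toHomComodule.antipodeShear_coact b)
    _ = canPreLin' Ac (a ⊗ₜ b) := (Ac.canPreLin'_tmul a b).symm

end HomComoduleAlgebra

end

/-! STATEMENT 6: `can' = f ∘ can`, and consequently `can` is bijective iff `can'` is. -/
theorem statement6
    (k : Type) [Field k] (H : Type) [AddCommGroup H] [Module k H]
    (Hh : MonoidalHomHopf k H)
    (Sinv : H →ₗ[k] H)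
    (hSinv₁ : Sinv ∘ₗ Hh.antipode = LinearMap.id)
    (hSinv₂ : Hh.antipode ∘ₗ Sinv = LinearMap.id)
    (A : Type) [AddCommGroup A] [Module k A]
    (Ac : HomComoduleAlgebra Hh.toMonoidalHomBialgebra A)
    (f : A ⊗[k] H →ₗ[k] A ⊗[k] H)
    (hf : f =
      (TensorProduct.map Ac.aut.toLinearMap (TensorProduct.lift Hh.mul)) ∘ₗ
        (TensorProduct.assoc k A H H).toLinearMap ∘ₗ
          (TensorProduct.map Ac.coact (Hh.antipode ∘ₗ Hh.aut.symm.toLinearMap))) :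
    -- can' = f ∘ can (at the level of A ⊗ A)
    f ∘ₗ canPreLin Ac = canPreLin' Ac ∧
    -- consequently, the induced map can : A ⊗_B A → A ⊗ H is bijective iff can' is
    (∀ (canMap can'Map :
        ((A ⊗[k] A) ⧸ relSubR Ac.mul Ac.aut (coinvA Ac) Ac.mul Ac.aut) →ₗ[k] A ⊗[k] H),
      canMap ∘ₗ (relSubR Ac.mul Ac.aut (coinvA Ac) Ac.mul Ac.aut).mkQ = canPreLin Ac →
      can'Map ∘ₗ (relSubR Ac.mul Ac.aut (coinvA Ac) Ac.mul Ac.aut).mkQ = canPreLin' Ac →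
      (Function.Bijective canMap ↔ Function.Bijective can'Map)) := by
  subst hf
  have hS : Function.Bijective Hh.antipode :=
    Function.bijective_iff_has_inverse.2
      ⟨Sinv, LinearMap.congr_fun hSinv₁, LinearMap.congr_fun hSinv₂⟩
  refine ⟨Ac.antipodeShear_comp_canPreLin, fun canMap can'Map hcan hcan' => ?_⟩
  have can'Map_eq : can'Map = Ac.toHomComodule.antipodeShear ∘ₗ canMap := by
    apply Submodule.linearMap_qext
    rw [hcan', LinearMap.comp_assoc, hcan, Ac.antipodeShear_comp_canPreLin]
  rw [can'Map_eq, LinearMap.coe_comp]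
  exact ((Ac.toHomComodule.antipodeShear_bijective hS).of_comp_iff' canMap).symm
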